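/- Let n ≥ 2 be an integer and let λ_1 ≥ λ_2 ≥ … ≥ λ_{2n} ≥ 0 be reals. Let {(p_k, q_k)}_{k=1}^n be any partition of the index set {1,…,2n} into n pairs (i.e., every index in {1,…,2n} occurs exactly once among p_1,…,p_n,q_1,…,q_n). Then for every k₀ ∈ {1,…,n}: λ_{p_{k₀}} − λ_{q_{k₀}} − 2·∑_{k≠k₀} √(λ_{p_k}·λ_{q_k}) ≤ λ_1 − λ_{n+1} − 2·∑_{ℓ=2}^n √(λ_ℓ·λ_{2n+2−ℓ}). In other words, among all pairings of a sorted nonnegative spectrum, the pairing that matches λ_1 with λ_{n+1} and λ_ℓ with λ_{2n+2−ℓ} (2 ≤ ℓ ≤ n) maximizes the quantity (difference of the distinguished pair) minus twice the sum of the geometric means of the remaining pairs. -/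

import Mathlib

/-!
Write `s i = √(lam i)` and let `τ` be the permutation of the indices exchanging `p k` and `q k` for
`k ≠ k₀` and fixing `a = p k₀` and `b = q k₀`.  Then
`s b ^ 2 + 2 ∑_{k ≠ k₀} s (p k) * s (q k) = ∑_{i ≠ a} s i * s (τ i)`, and the claim is
`s a ^ 2 - ∑_{i ≠ a} s i * s (τ i) ≤ s 0 ^ 2 - ∑_{i ≠ 0} s i * s (2n - i)`.
Conjugating `τ` with the transposition of `0` and `a` gives a permutation fixing `0`; since `s 0` is
the largest value, putting `s a` in its place only decreases the sum.  The rearrangement inequality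
on the nonzero indices then gives the bound, the antitone pairing there being `i ↦ 2n - i`, which is
negation on `Fin (2 * n)` (`sum_mul_neg_le_of_fixed`).
-/

/-- Pairing inequality for a permutation `τ` fixing `a`. The sums run over all indices, so each
contains one unwanted square (of `s 0`, resp. `s a`); this is why the squares appear twice. -/
theorem sum_mul_neg_le_of_fixed {N : ℕ} [NeZero N] (s : Fin N → ℝ) (hs : Antitone s)
    (h0 : ∀ i, 0 ≤ s i) (τ : Equiv.Perm (Fin N)) (a : Fin N) (ha : τ a = a) :
    ∑ i, s i * s (-i) - 2 * s 0 ^ 2 ≤ ∑ i, s i * s (τ i) - 2 * s a ^ 2 := by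
  set φ : Equiv.Perm (Fin N) := Equiv.swap 0 a with hφ
  set ρ : Equiv.Perm (Fin N) := (φ.trans τ).trans φ with hρ
  have hρ0 : ρ 0 = 0 := by simp [hρ, hφ, ha]
  have hle : ∀ i, i ≠ 0 → s i ≤ s (φ i) := by
    intro i hi
    by_cases hia : i = a
    · subst hia
      simpa [hφ] using hs (Fin.zero_le i)
    · rw [hφ, Equiv.swap_apply_of_ne_of_ne hi hia]
  have hanti : AntivaryOn s (fun i => s (-i)) (Finset.univ.erase (0 : Fin N)) := by
    intro i hi j hj hij
    simp only [Finset.coe_erase, Finset.coe_univ, Set.mem_sdiff, Set.mem_univ, true_and,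
      Set.mem_singleton_iff] at hi hj
    apply hs
    by_contra! hlt
    refine absurd (hs ?_) (not_le.mpr hij)
    have hi' : i.val ≠ 0 := fun h => hi (Fin.ext h)
    have hj' : j.val ≠ 0 := fun h => hj (Fin.ext h)
    rw [Fin.le_def, Fin.val_neg', Fin.val_neg', Nat.mod_eq_of_lt (by omega),
      Nat.mod_eq_of_lt (by omega)]
    rw [Fin.lt_def] at hlt
    omega
  have hre := hanti.sum_mul_le_sum_mul_comp_perm (σ := ρ.trans (Equiv.neg _)) (by
    intro i hi
    simp only [Finset.coe_erase, Finset.coe_univ, Set.mem_sdiff, Set.mem_univ, true_and,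
      Set.mem_singleton_iff]
    rintro rfl
    simp [hρ0] at hi)
  simp only [Equiv.trans_apply, Equiv.neg_apply, neg_neg] at hre
  have hmono : ∑ i ∈ Finset.univ.erase (0 : Fin N), s i * s (ρ i) ≤
      ∑ i ∈ Finset.univ.erase (0 : Fin N), s (φ i) * s (τ (φ i)) := by
    refine Finset.sum_le_sum fun i hi => ?_
    have hi0 : i ≠ 0 := (Finset.mem_erase.mp hi).1
    have hρi : ρ i ≠ 0 := fun h => hi0 (ρ.injective (h.trans hρ0.symm))
    have h2 := hle _ hρi
    have h3 : φ (ρ i) = τ (φ i) := by simp [hρ, hφ]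
    rw [h3] at h2
    exact mul_le_mul (hle i hi0) h2 (h0 _) (h0 _)
  have hsum : ∑ i, s i * s (τ i) = ∑ i, s (φ i) * s (τ (φ i)) :=
    (Equiv.sum_comp φ fun i => s i * s (τ i)).symm
  rw [hsum, ← Finset.add_sum_erase _ _ (Finset.mem_univ (0 : Fin N)),
    ← Finset.add_sum_erase _ (fun i => s (φ i) * s (τ (φ i))) (Finset.mem_univ (0 : Fin N))]
  have hφ0 : φ 0 = a := by simp [hφ]
  have h0a : s a ≤ s 0 := hs (Fin.zero_le a)
  simp only [hφ0, ha, neg_zero]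
  nlinarith [h0 a]

/-- Over all of `Fin (2 * n)`, the pairing `i ↦ -i` fixes `0` and `n` and matches `ℓ` with
`2 * n - ℓ`. -/
theorem sum_mul_neg_eq (n : ℕ) (hn : 2 ≤ n) [NeZero (2 * n)] (s : ℕ → ℝ) :
    ∑ i : Fin (2 * n), s i * s ((-i : Fin (2 * n)) : ℕ) =
      s 0 ^ 2 + s n ^ 2 + 2 * ∑ ℓ ∈ Finset.Ico 1 n, s ℓ * s (2 * n - ℓ) := by
  simp only [Fin.val_neg']
  rw [Fin.sum_univ_eq_sum_range (fun i => s i * s ((2 * n - i) % (2 * n))) (2 * n),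
    Finset.range_eq_Ico, Finset.sum_eq_sum_Ico_succ_bot (by omega),
    ← Finset.sum_Ico_consecutive _ (show 0 + 1 ≤ n by omega) (show n ≤ 2 * n by omega),
    Finset.sum_eq_sum_Ico_succ_bot (show n < 2 * n by omega)]
  have h1 : ∑ i ∈ Finset.Ico (0 + 1) n, s i * s ((2 * n - i) % (2 * n)) =
      ∑ ℓ ∈ Finset.Ico 1 n, s ℓ * s (2 * n - ℓ) := by
    refine Finset.sum_congr rfl fun i hi => ?_
    rw [Finset.mem_Ico] at hi
    rw [Nat.mod_eq_of_lt (by omega)]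
  have h2 : ∑ i ∈ Finset.Ico (n + 1) (2 * n), s i * s ((2 * n - i) % (2 * n)) =
      ∑ ℓ ∈ Finset.Ico 1 n, s ℓ * s (2 * n - ℓ) := by
    refine Finset.sum_bij' (fun i _ => 2 * n - i) (fun i _ => 2 * n - i) ?_ ?_ ?_ ?_ ?_
    all_goals intro i hi; rw [Finset.mem_Ico] at hi
    · rw [Finset.mem_Ico]; omega
    · rw [Finset.mem_Ico]; omega
    · omega
    · omega
    · rw [Nat.mod_eq_of_lt (by omega), show 2 * n - (2 * n - i) = i by omega, mul_comm]
  have h3 : (2 * n - n) % (2 * n) = n := by rw [Nat.mod_eq_of_lt (by omega)]; omega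
  have h4 : (2 * n - 0) % (2 * n) = 0 := by simp
  rw [h1, h2, h3, h4]
  ring


/-- Among all partitions of a sorted nonnegative spectrum `λ_1 ≥ … ≥ λ_{2n} ≥ 0`
(0-based: `lam 0 ≥ … ≥ lam (2n-1) ≥ 0`) into `n` pairs `(p k, q k)`, the pairing matching
`λ_1` with `λ_{n+1}` and `λ_ℓ` with `λ_{2n+2-ℓ}` (for `2 ≤ ℓ ≤ n`) maximizes, for any
distinguished pair `k₀`, the quantity
`λ_{p k₀} - λ_{q k₀} - 2 ∑_{k ≠ k₀} √(λ_{p k} · λ_{q k})`. -/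
theorem pairing_inequality (n : ℕ) (hn : 2 ≤ n) (lam : ℕ → ℝ)
    (hsort : ∀ i j, i ≤ j → j < 2 * n → lam j ≤ lam i)
    (hpos : ∀ i < 2 * n, 0 ≤ lam i)
    (p q : Fin n → Fin (2 * n))
    (hbij : Function.Bijective (Sum.elim p q))
    (k₀ : Fin n) :
    lam (p k₀) - lam (q k₀) -
        2 * ∑ k ∈ Finset.univ.erase k₀, Real.sqrt (lam (p k) * lam (q k)) ≤
      lam 0 - lam n -
        2 * ∑ ℓ ∈ Finset.Ico 1 n, Real.sqrt (lam ℓ * lam (2 * n - ℓ)) := by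

  have : NeZero (2 * n) := ⟨by omega⟩
  set s : ℕ → ℝ := fun i => √(lam i) with hs
  have hsq : ∀ i < 2 * n, s i ^ 2 = lam i := fun i hi => Real.sq_sqrt (hpos i hi)
  let e : Fin n ⊕ Fin n ≃ Fin (2 * n) := Equiv.ofBijective _ hbij
  -- Exchange the two members of every pair except the distinguished one.
  let σ : Equiv.Perm (Fin n ⊕ Fin n) :=
    (Equiv.sumComm _ _).trans (Equiv.swap (Sum.inl k₀) (Sum.inr k₀))
  have hel : ∀ k, e (Sum.inl k) = p k := fun _ => rfl
  have her : ∀ k, e (Sum.inr k) = q k := fun _ => rfl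
  have hσl : σ (Sum.inl k₀) = Sum.inl k₀ := by simp [σ]
  have hσr : σ (Sum.inr k₀) = Sum.inr k₀ := by simp [σ]
  have hσl' : ∀ k, k ≠ k₀ → σ (Sum.inl k) = Sum.inr k := fun k hk => by
    simp [σ, Equiv.swap_apply_def, hk]
  have hσr' : ∀ k, k ≠ k₀ → σ (Sum.inr k) = Sum.inl k := fun k hk => by
    simp [σ, Equiv.swap_apply_def, hk]
  have hcomp : ∀ z, ((e.symm.trans σ).trans e) (e z) = e (σ z) := fun z => by simp
  have key := sum_mul_neg_le_of_fixed (fun i : Fin (2 * n) => s i)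
    (fun i j hij => Real.sqrt_le_sqrt (hsort i j hij j.isLt)) (fun i => Real.sqrt_nonneg _)
    ((e.symm.trans σ).trans e) (p k₀) (by
      rw [← hel]; simp [hσl])
  have hpair : ∑ i : Fin (2 * n), s i * s (((e.symm.trans σ).trans e) i) =
      s (p k₀) ^ 2 + s (q k₀) ^ 2 +
        2 * ∑ k ∈ Finset.univ.erase k₀, √(lam (p k) * lam (q k)) := by
    rw [← Equiv.sum_comp e, Fintype.sum_sum_type,
      ← Finset.add_sum_erase _ _ (Finset.mem_univ k₀),
      ← Finset.add_sum_erase _ (fun k => s (e (Sum.inr k)) * _) (Finset.mem_univ k₀)]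
    have h1 : ∀ k ∈ Finset.univ.erase k₀, s (e (Sum.inl k)) *
        s (((e.symm.trans σ).trans e) (e (Sum.inl k))) = √(lam (p k) * lam (q k)) := by
      intro k hk
      rw [hcomp, hσl' k (Finset.ne_of_mem_erase hk), hel, her]
      exact (Real.sqrt_mul (hpos _ (p k).isLt) _).symm
    have h2 : ∀ k ∈ Finset.univ.erase k₀, s (e (Sum.inr k)) *
        s (((e.symm.trans σ).trans e) (e (Sum.inr k))) = √(lam (p k) * lam (q k)) := by
      intro k hk
      rw [hcomp, hσr' k (Finset.ne_of_mem_erase hk), hel, her]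
      rw [mul_comm]
      exact (Real.sqrt_mul (hpos _ (p k).isLt) _).symm
    rw [Finset.sum_congr rfl h1, Finset.sum_congr rfl h2]
    simp only [hcomp, hσl, hσr]
    simp only [hel, her]
    ring
  have htarget : ∑ ℓ ∈ Finset.Ico 1 n, √(lam ℓ * lam (2 * n - ℓ)) =
      ∑ ℓ ∈ Finset.Ico 1 n, s ℓ * s (2 * n - ℓ) := by
    refine Finset.sum_congr rfl fun ℓ hℓ => Real.sqrt_mul (hpos _ ?_) _
    rw [Finset.mem_Ico] at hℓ
    omega
  rw [hpair, sum_mul_neg_eq n hn s, hsq _ (p k₀).isLt, hsq _ (q k₀).isLt, Fin.val_zero,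
    hsq 0 (by omega), hsq n (by omega)] at key
  rw [htarget]
  linarith
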